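/- Let P be a probability measure on Z satisfying Bernstein's condition with constant c > 0, let π be a prior probability measure on Θ, set α = 1/(c + C), and let d > 0, κ ≥ 1 with d ≤ αn. Assume the prior mass condition π({θ ∈ Θ : R_P(θ) − R_P* ≤ s}) ≥ s^d/κ for all s ∈ (0,1]. Then E_S E_{θ∼ρ_S(π,α)}[R_P(θ)] ≤ R_P* + 2( d(1 + log(αn/d)) + log κ )/(αn), where E_S denotes expectation over the i.i.d. n-sample S from P. -/

import Mathlib

open MeasureTheory ProbabilityTheory
open scoped Classical

noncomputable section

/-- Kullback–Leibler divergence of `ρ` with respect to `π`. -/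
def klDiv {Ω : Type*} [MeasurableSpace Ω] (ρ π : Measure Ω) : ENNReal :=
  if ρ ≪ π ∧ Integrable (llr ρ π) ρ then ENNReal.ofReal (∫ x, llr ρ π x ∂ρ) else ⊤

/-- The prediction risk `R_P(θ) = E_{Z∼P}[ℓ(Z,θ)]`. -/
def risk {Z Θ : Type*} [MeasurableSpace Z] (ℓ : Z → Θ → ℝ) (P : Measure Z) (θ : Θ) : ℝ :=
  ∫ z, ℓ z θ ∂P

/-- The optimal risk `R_P* = inf_θ R_P(θ)`. -/
def optRisk {Z Θ : Type*} [MeasurableSpace Z] (ℓ : Z → Θ → ℝ) (P : Measure Z) : ℝ :=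
  ⨅ θ, risk ℓ P θ

/-- The empirical risk `R̂_S(θ) = (1/n) ∑ᵢ ℓ(Zᵢ,θ)`. -/
def empRisk {Z Θ : Type*} {n : ℕ} (ℓ : Z → Θ → ℝ) (S : Fin n → Z) (θ : Θ) : ℝ :=
  (∑ i, ℓ (S i) θ) / n

/-- The PAC-Bayes risk estimate `R̂_S(ρ,π,α) = E_{θ∼ρ}[R̂_S(θ)] + KL(ρ∥π)/(αn)`. -/
def riskEstimate {Z Θ : Type*} [MeasurableSpace Θ] {n : ℕ} (ℓ : Z → Θ → ℝ) (S : Fin n → Z)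
    (ρ π : Measure Θ) (α : ℝ) : ℝ :=
  (∫ θ, empRisk ℓ S θ ∂ρ) + (klDiv ρ π).toReal / (α * n)


/-- The Gibbs posterior `ρ_S(π,α)`, with density proportional to
`exp(−αn R̂_S)` with respect to the prior `π`. -/
def gibbs {Z Θ : Type*} [MeasurableSpace Θ] {n : ℕ} (ℓ : Z → Θ → ℝ) (π : Measure Θ)
    (α : ℝ) (S : Fin n → Z) : Measure Θ :=
  π.withDensity fun θ => ENNReal.ofReal
    (Real.exp (-(α * n) * empRisk ℓ S θ) / ∫ ϑ, Real.exp (-(α * n) * empRisk ℓ S ϑ) ∂π)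

/-!
Only the excess loss `X_θ = ℓ(·,θ) - ℓ(·,θ*)` matters, since subtracting a function of the sample
from the empirical risk does not change the Gibbs posterior. From `e^y ≤ 1 + y + (1 + |y|) y² / 2`
on `[-1, 1]` and Bernstein's condition, `E e^{-αX_θ} ≤ e^{-α E[X_θ] / 2}` as soon as
`α(c + C) ≤ 1`, so that, with `R` and `R̂_S` the population and empirical excess risks,
`E_S e^{αn(R(θ)/2 - R̂_S(θ))} ≤ 1` for every `θ`. Jensen's inequality under the posterior bounds
`αn/2` times its mean excess risk by
`log ∫ e^{αn(R/2 - R̂_S)} dπ - log ∫ e^{-αn R̂_S} dπ`. The first term has nonpositive expectation,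
because `log x ≤ x - 1`; restricting the second integral to `A = {R ≤ s}` and using Jensen's
inequality under `π(· | A)` bounds the expectation of the rest by `αns - log π(A)`. The prior mass
condition at `s = d / (αn)` then gives the rate.
-/

section ExponentialMoment

lemma exp_le_one_add_add_sq {y : ℝ} (hy : |y| ≤ 1) :
    Real.exp y ≤ 1 + y + (1 + |y|) * (y ^ 2 / 2) := by
  have h := (abs_le.1 (Real.exp_bound hy (n := 3) (by norm_num))).2
  norm_num [Finset.sum_range_succ, Nat.factorial] at h
  have hcube : |y| ^ 3 = |y| * y ^ 2 := by rw [pow_succ', sq_abs]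
  have : 0 ≤ |y| * y ^ 2 := by positivity
  linarith

variable {Ω : Type*} [MeasurableSpace Ω] {μ : Measure Ω} {X : Ω → ℝ}

lemma integrable_exp_mul_of_abs_le [IsFiniteMeasure μ] {B : ℝ} (hX : AEMeasurable X μ)
    (hB : ∀ᵐ ω ∂μ, |X ω| ≤ B) (t : ℝ) : Integrable (fun ω => Real.exp (t * X ω)) μ :=
  integrable_exp_mul_of_mem_Icc hX (hB.mono fun _ => abs_le.1)

variable [IsProbabilityMeasure μ]

lemma mgf_neg_le_one_sub_add_sq {α C : ℝ} (hX : AEMeasurable X μ) (hbound : ∀ᵐ ω ∂μ, |X ω| ≤ C)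
    (hα : 0 ≤ α) (hαC : α * C ≤ 1) :
    mgf X μ (-α) ≤ 1 - α * μ[X] + (1 + α * C) * α ^ 2 / 2 * ∫ ω, X ω ^ 2 ∂μ := by
  have hXint : Integrable X μ := .of_bound hX.aestronglyMeasurable C hbound
  have hX2int : Integrable (fun ω => X ω ^ 2) μ :=
    .of_bound (hX.pow_const 2).aestronglyMeasurable (C ^ 2) <| by
      filter_upwards [hbound] with ω hω
      rw [norm_pow]
      exact pow_le_pow_left₀ (norm_nonneg _) hω 2
  have hlin : Integrable (fun ω => 1 - α * X ω) μ := (integrable_const 1).sub (hXint.const_mul α)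
  have hsq := hX2int.const_mul ((1 + α * C) * α ^ 2 / 2)
  have hquad : ∀ᵐ ω ∂μ,
      Real.exp (-α * X ω) ≤ 1 - α * X ω + (1 + α * C) * α ^ 2 / 2 * X ω ^ 2 := by
    filter_upwards [hbound] with ω hω
    have habs : |-α * X ω| ≤ α * C := by
      rw [abs_mul, abs_neg, abs_of_nonneg hα]
      gcongr
    calc Real.exp (-α * X ω)
        ≤ 1 + -α * X ω + (1 + |-α * X ω|) * ((-α * X ω) ^ 2 / 2) :=
          exp_le_one_add_add_sq (habs.trans hαC)
      _ ≤ 1 + -α * X ω + (1 + α * C) * ((-α * X ω) ^ 2 / 2) := by gcongr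
      _ = _ := by ring
  calc mgf X μ (-α)
      ≤ ∫ ω, (1 - α * X ω + (1 + α * C) * α ^ 2 / 2 * X ω ^ 2) ∂μ :=
        integral_mono_of_nonneg (ae_of_all _ fun _ => (Real.exp_pos _).le) (hlin.add hsq) hquad
    _ = _ := by
        rw [integral_add hlin hsq, integral_sub (integrable_const 1) (hXint.const_mul α),
          integral_const_mul, integral_const_mul]
        simp

lemma mgf_neg_le_exp_of_bernstein {α c C : ℝ} (hX : AEMeasurable X μ)
    (hbound : ∀ᵐ ω ∂μ, |X ω| ≤ C) (hc : 0 < c) (hBern : ∫ ω, X ω ^ 2 ∂μ ≤ c * μ[X])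
    (hα : 0 < α) (hαc : α * (c + C) ≤ 1) :
    mgf X μ (-α) ≤ Real.exp (-(α / 2) * μ[X]) := by
  have hC : 0 ≤ C := by
    obtain ⟨ω, hω⟩ := hbound.exists
    exact (abs_nonneg _).trans hω
  have hmean : 0 ≤ μ[X] :=
    nonneg_of_mul_nonneg_right ((integral_nonneg fun ω => sq_nonneg (X ω)).trans hBern) hc
  have hαc0 : 0 < α * c := mul_pos hα hc
  have hcoef : (1 + α * C) * (α * c) ≤ 1 := by nlinarith [sq_nonneg (1 - α * c)]
  calc mgf X μ (-α)
      ≤ 1 - α * μ[X] + (1 + α * C) * α ^ 2 / 2 * ∫ ω, X ω ^ 2 ∂μ :=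
        mgf_neg_le_one_sub_add_sq hX hbound hα.le (by linarith)
    _ ≤ 1 - α * μ[X] + (1 + α * C) * α ^ 2 / 2 * (c * μ[X]) := by gcongr
    _ = 1 - α * μ[X] + (1 + α * C) * (α * c) * (α / 2 * μ[X]) := by ring
    _ ≤ 1 - α * μ[X] + 1 * (α / 2 * μ[X]) := by gcongr
    _ = -(α / 2) * μ[X] + 1 := by ring
    _ ≤ _ := Real.add_one_le_exp _

end ExponentialMoment

section ChangeOfMeasure

variable {Θ : Type*} [MeasurableSpace Θ] {μ : Measure Θ} {f g : Θ → ℝ}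

lemma exp_integral_le_integral_exp [IsProbabilityMeasure μ] (hf : Integrable f μ)
    (hexp : Integrable (fun θ => Real.exp (f θ)) μ) :
    Real.exp (∫ θ, f θ ∂μ) ≤ ∫ θ, Real.exp (f θ) ∂μ :=
  convexOn_exp.map_integral_le Real.continuous_exp.continuousOn isClosed_univ
    (ae_of_all _ fun _ => Set.mem_univ _) hf hexp

lemma measureReal_mul_integral_cond (μ : Measure Θ) [IsFiniteMeasure μ] {A : Set Θ} (hA : μ A ≠ 0)
    (f : Θ → ℝ) : μ.real A * ∫ θ, f θ ∂(μ[|A]) = ∫ θ in A, f θ ∂μ := by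
  have hpos : μ.real A ≠ 0 := (measureReal_ne_zero_iff).2 hA
  rw [ProbabilityTheory.cond, integral_smul_measure, ENNReal.toReal_inv, smul_eq_mul]
  exact mul_inv_cancel_left₀ hpos _

/-- This is the Donsker–Varadhan lower bound `∫ f ∂ρ - KL(ρ‖μ) ≤ log ∫ exp f ∂μ` at `ρ = μ[|A]`,
whose divergence from a probability measure `μ` is `-log μ(A)`. -/
lemma log_measureReal_add_integral_cond_le [IsFiniteMeasure μ] {A : Set Θ} (hA : μ A ≠ 0)
    (hf : Integrable f (μ[|A])) (hexp : Integrable (fun θ => Real.exp (f θ)) μ) :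
    Real.log (μ.real A) + ∫ θ, f θ ∂(μ[|A]) ≤ Real.log (∫ θ, Real.exp (f θ) ∂μ) := by
  have : NeZero μ := ⟨fun h => hA (by simp [h])⟩
  have : IsProbabilityMeasure (μ[|A]) := cond_isProbabilityMeasure hA
  have hpos : 0 < μ.real A := ENNReal.toReal_pos hA (measure_ne_top μ A)
  have hexp_cond : Integrable (fun θ => Real.exp (f θ)) (μ[|A]) :=
    hexp.integrableOn.smul_measure (ENNReal.inv_ne_top.2 hA)
  rw [Real.le_log_iff_exp_le (integral_exp_pos hexp), Real.exp_add, Real.exp_log hpos]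
  calc μ.real A * Real.exp (∫ θ, f θ ∂(μ[|A]))
      ≤ μ.real A * ∫ θ, Real.exp (f θ) ∂(μ[|A]) := by
        gcongr
        exact exp_integral_le_integral_exp hf hexp_cond
    _ = ∫ θ in A, Real.exp (f θ) ∂μ := measureReal_mul_integral_cond μ hA _
    _ ≤ ∫ θ, Real.exp (f θ) ∂μ :=
        setIntegral_le_integral hexp (ae_of_all _ fun _ => (Real.exp_pos _).le)

lemma integral_tilted_le_log_sub_log [NeZero μ] (hf : Integrable (fun θ => Real.exp (f θ)) μ)
    (hg : Integrable g (μ.tilted f)) (hfg : Integrable (fun θ => Real.exp (f θ + g θ)) μ) :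
    ∫ θ, g θ ∂(μ.tilted f) ≤
      Real.log (∫ θ, Real.exp (f θ + g θ) ∂μ) - Real.log (∫ θ, Real.exp (f θ) ∂μ) := by
  have : IsProbabilityMeasure (μ.tilted f) := isProbabilityMeasure_tilted hf
  have hexp : Integrable (fun θ => Real.exp (g θ)) (μ.tilted f) := by
    rw [integrable_tilted_iff hf]
    simpa only [smul_eq_mul, ← Real.exp_add] using hfg
  have hZ := integral_exp_pos hf
  have hW := integral_exp_pos hfg
  rw [← Real.log_div hW.ne' hZ.ne', Real.le_log_iff_exp_le (div_pos hW hZ)]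
  exact (exp_integral_le_integral_exp hg hexp).trans_eq (integral_exp_tilted f g)

lemma integral_tilted_le_log_sub_integral_cond [IsFiniteMeasure μ] {A : Set Θ} (hA : μ A ≠ 0)
    (hf : Integrable (fun θ => Real.exp (f θ)) μ) (hfA : Integrable f (μ[|A]))
    (hg : Integrable g (μ.tilted f)) (hfg : Integrable (fun θ => Real.exp (f θ + g θ)) μ) :
    ∫ θ, g θ ∂(μ.tilted f) ≤
      Real.log (∫ θ, Real.exp (f θ + g θ) ∂μ) - ∫ θ, f θ ∂(μ[|A]) - Real.log (μ.real A) := by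
  have : NeZero μ := ⟨fun h => hA (by simp [h])⟩
  linarith [integral_tilted_le_log_sub_log hf hg hfg,
    log_measureReal_add_integral_cond_le hA hfA hf]

lemma stronglyMeasurable_integral_tilted {Ω E : Type*} [MeasurableSpace Ω] [NormedAddCommGroup E]
    [NormedSpace ℝ E] [SFinite μ] {F : Ω → Θ → ℝ} (hF : Measurable (Function.uncurry F))
    {G : Ω → Θ → E} (hG : StronglyMeasurable (Function.uncurry G)) :
    StronglyMeasurable fun ω => ∫ θ, G ω θ ∂(μ.tilted (F ω)) := by
  have hexp : StronglyMeasurable (Function.uncurry fun ω θ => Real.exp (F ω θ)) :=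
    (Real.measurable_exp.comp hF).stronglyMeasurable
  have hpartition : StronglyMeasurable fun ω => ∫ θ, Real.exp (F ω θ) ∂μ :=
    hexp.integral_prod_right
  simp_rw [integral_tilted]
  exact ((hexp.div (hpartition.comp_measurable measurable_fst)).smul hG).integral_prod_right

end ChangeOfMeasure

section Risk

variable {Z Θ : Type*} {ℓ : Z → Θ → ℝ} {C : ℝ} {n : ℕ}

lemma natCast_mul_empRisk (ℓ : Z → Θ → ℝ) (S : Fin n → Z) (θ : Θ) :
    n * empRisk ℓ S θ = ∑ i, ℓ (S i) θ := by
  rcases Nat.eq_zero_or_pos n with rfl | hn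
  · simp
  · exact mul_div_cancel₀ _ (by positivity)

lemma abs_empRisk_le (hn : n ≠ 0) (hℓ : ∀ z θ, |ℓ z θ| ≤ C) (S : Fin n → Z) (θ : Θ) :
    |empRisk ℓ S θ| ≤ C := by
  have hn' : (0 : ℝ) < n := by positivity
  rw [empRisk, abs_div, Nat.abs_cast, div_le_iff₀ hn']
  calc |∑ i, ℓ (S i) θ| ≤ ∑ i, |ℓ (S i) θ| := Finset.abs_sum_le_sum_abs _ _
    _ ≤ ∑ _i : Fin n, C := Finset.sum_le_sum fun i _ => hℓ _ _
    _ = C * n := by simp [mul_comm]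

lemma optRisk_eq_risk [MeasurableSpace Z] {P : Measure Z} {θstar : Θ}
    (h : ∀ θ, risk ℓ P θstar ≤ risk ℓ P θ) : optRisk ℓ P = risk ℓ P θstar :=
  IsLeast.csInf_eq ⟨Set.mem_range_self θstar, Set.forall_mem_range.2 h⟩

variable [MeasurableSpace Z] {P : Measure Z} [IsProbabilityMeasure P]

lemma abs_risk_le (hℓ : ∀ z θ, |ℓ z θ| ≤ C) (θ : Θ) : |risk ℓ P θ| ≤ C := by
  simpa only [risk, Real.norm_eq_abs, probReal_univ, mul_one] using
    norm_integral_le_of_norm_le_const (μ := P) (f := fun z => ℓ z θ) (ae_of_all _ fun z => hℓ z θ)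

lemma abs_half_risk_sub_empRisk_le (hn : n ≠ 0) (hℓ : ∀ z θ, |ℓ z θ| ≤ C) (S : Fin n → Z)
    (θ : Θ) : |risk ℓ P θ / 2 - empRisk ℓ S θ| ≤ C / 2 + C := by
  refine (abs_sub _ _).trans (add_le_add ?_ (abs_empRisk_le hn hℓ S θ))
  rw [abs_div, abs_two]
  gcongr
  exact abs_risk_le hℓ θ

lemma integral_empRisk (hn : n ≠ 0) {θ : Θ} (hθ : Integrable (fun z => ℓ z θ) P) :
    ∫ S, empRisk ℓ S θ ∂(Measure.pi fun _ : Fin n => P) = risk ℓ P θ := by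
  have hmean (i : Fin n) : ∫ S, ℓ (S i) θ ∂(Measure.pi fun _ : Fin n => P) = risk ℓ P θ :=
    integral_comp_eval (μ := fun _ : Fin n => P) hθ.aestronglyMeasurable
  simp_rw [empRisk]
  rw [integral_div,
    integral_finsetSum _ fun i _ => integrable_comp_eval (μ := fun _ : Fin n => P) hθ]
  simp [hmean, hn]

lemma integral_exp_neg_mul_empRisk (ℓ : Z → Θ → ℝ) (P : Measure Z) [SigmaFinite P] (n : ℕ)
    (α : ℝ) (θ : Θ) :
    ∫ S, Real.exp (-(α * n) * empRisk ℓ S θ) ∂(Measure.pi fun _ : Fin n => P) =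
      mgf (fun z => ℓ z θ) P (-α) ^ n := by
  have hprod (S : Fin n → Z) :
      Real.exp (-(α * n) * empRisk ℓ S θ) = ∏ i, Real.exp (-α * ℓ (S i) θ) := by
    rw [← Real.exp_sum, ← Finset.mul_sum, ← natCast_mul_empRisk]
    ring_nf
  simp_rw [hprod]
  rw [integral_fintype_prod_eq_pow (fun z => Real.exp (-α * ℓ z θ)), Fintype.card_fin, mgf]

lemma integral_exp_risk_sub_empRisk_le_one {c α : ℝ} {θ : Θ} (hmeas : Measurable fun z => ℓ z θ)
    (hℓ : ∀ z, |ℓ z θ| ≤ C) (hc : 0 < c) (hBern : ∫ z, ℓ z θ ^ 2 ∂P ≤ c * risk ℓ P θ)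
    (hα : 0 < α) (hαc : α * (c + C) ≤ 1) :
    ∫ S, Real.exp (α * n * (risk ℓ P θ / 2 - empRisk ℓ S θ)) ∂(Measure.pi fun _ : Fin n => P)
      ≤ 1 := by
  have hmgf : mgf (fun z => ℓ z θ) P (-α) ≤ Real.exp (-(α / 2) * risk ℓ P θ) :=
    mgf_neg_le_exp_of_bernstein hmeas.aemeasurable (ae_of_all _ hℓ) hc hBern hα hαc
  have hsplit (S : Fin n → Z) : Real.exp (α * n * (risk ℓ P θ / 2 - empRisk ℓ S θ)) =
      Real.exp (n * (α / 2 * risk ℓ P θ)) * Real.exp (-(α * n) * empRisk ℓ S θ) := by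
    rw [← Real.exp_add]
    ring_nf
  simp_rw [hsplit]
  rw [integral_const_mul, integral_exp_neg_mul_empRisk]
  calc Real.exp (n * (α / 2 * risk ℓ P θ)) * mgf (fun z => ℓ z θ) P (-α) ^ n
      ≤ Real.exp (n * (α / 2 * risk ℓ P θ)) * Real.exp (-(α / 2) * risk ℓ P θ) ^ n := by
        gcongr
        exact mgf_nonneg
    _ = 1 := by
        rw [← Real.exp_nat_mul, ← Real.exp_add, Real.exp_eq_one_iff]
        ring

end Risk

section PACBayes

lemma gibbs_eq_tilted {Z Θ : Type*} [MeasurableSpace Θ] {n : ℕ} (ℓ : Z → Θ → ℝ) (π : Measure Θ)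
    (α : ℝ) (S : Fin n → Z) :
    gibbs ℓ π α S = π.tilted fun θ => -(α * n) * empRisk ℓ S θ := rfl

variable {Z Θ : Type*} [MeasurableSpace Z] [MeasurableSpace Θ] {ℓ : Z → Θ → ℝ} {C : ℝ} {n : ℕ}
  {P : Measure Z} [IsProbabilityMeasure P] {π : Measure Θ} [IsProbabilityMeasure π]

lemma measurable_uncurry_empRisk (hmeas : Measurable (Function.uncurry ℓ)) (n : ℕ) :
    Measurable (Function.uncurry fun (S : Fin n → Z) θ => empRisk ℓ S θ) :=
  (Finset.measurable_fun_sum _ fun i _ =>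
    hmeas.comp (((measurable_pi_apply i).comp measurable_fst).prodMk measurable_snd)).div_const _

lemma measurable_risk (hmeas : Measurable (Function.uncurry ℓ)) : Measurable (risk ℓ P) :=
  hmeas.stronglyMeasurable.integral_prod_left.measurable

lemma isProbabilityMeasure_gibbs (hmeas : Measurable (Function.uncurry ℓ))
    (hℓ : ∀ z θ, |ℓ z θ| ≤ C) (hn : n ≠ 0) (α : ℝ) (S : Fin n → Z) :
    IsProbabilityMeasure (gibbs ℓ π α S) :=
  isProbabilityMeasure_tilted <| integrable_exp_mul_of_abs_le
    (measurable_uncurry_empRisk hmeas n).of_uncurry_left.aemeasurable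
    (ae_of_all _ (abs_empRisk_le hn hℓ S)) _

lemma integrable_exp_risk_sub_empRisk (hmeas : Measurable (Function.uncurry ℓ))
    (hℓ : ∀ z θ, |ℓ z θ| ≤ C) (hn : n ≠ 0) (t : ℝ) (S : Fin n → Z) :
    Integrable (fun θ => Real.exp (t * (risk ℓ P θ / 2 - empRisk ℓ S θ))) π :=
  integrable_exp_mul_of_abs_le
    (((measurable_risk hmeas).div_const 2).sub
      (measurable_uncurry_empRisk hmeas n).of_uncurry_left).aemeasurable
    (ae_of_all _ (abs_half_risk_sub_empRisk_le hn hℓ S)) t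

lemma integral_risk_gibbs_le (hmeas : Measurable (Function.uncurry ℓ))
    (hℓ : ∀ z θ, |ℓ z θ| ≤ C) (hn : n ≠ 0) (α : ℝ) {A : Set Θ} (hA : π A ≠ 0) (S : Fin n → Z) :
    α * n / 2 * ∫ θ, risk ℓ P θ ∂(gibbs ℓ π α S) ≤
      Real.log (∫ θ, Real.exp (α * n * (risk ℓ P θ / 2 - empRisk ℓ S θ)) ∂π) +
        α * n * (∫ θ, empRisk ℓ S θ ∂(π[|A])) - Real.log (π.real A) := by
  have : IsProbabilityMeasure (π[|A]) := cond_isProbabilityMeasure hA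
  have : IsProbabilityMeasure (gibbs ℓ π α S) := isProbabilityMeasure_gibbs hmeas hℓ hn α S
  have hemp : Measurable (empRisk ℓ S) := (measurable_uncurry_empRisk hmeas n).of_uncurry_left
  have hrisk : Measurable (risk ℓ P) := measurable_risk hmeas
  have hemp_le := abs_empRisk_le hn hℓ S
  have hsum (θ : Θ) : -(α * n) * empRisk ℓ S θ + α * n / 2 * risk ℓ P θ =
      α * n * (risk ℓ P θ / 2 - empRisk ℓ S θ) := by ring
  have hrisk_int : Integrable (risk ℓ P) (gibbs ℓ π α S) :=
    .of_bound hrisk.aestronglyMeasurable C (ae_of_all _ (abs_risk_le hℓ))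
  have hemp_int : Integrable (empRisk ℓ S) (π[|A]) :=
    .of_bound hemp.aestronglyMeasurable C (ae_of_all _ hemp_le)
  have hexp_int :
      Integrable (fun θ => Real.exp (-(α * n) * empRisk ℓ S θ + α * n / 2 * risk ℓ P θ)) π := by
    simp_rw [hsum]
    exact integrable_exp_risk_sub_empRisk hmeas hℓ hn _ S
  have h := integral_tilted_le_log_sub_integral_cond hA
    (integrable_exp_mul_of_abs_le hemp.aemeasurable (ae_of_all _ hemp_le) _)
    (hemp_int.const_mul _) (hrisk_int.const_mul (α * n / 2)) hexp_int
  simp_rw [hsum, integral_const_mul, neg_mul, sub_neg_eq_add] at h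
  simpa only [gibbs_eq_tilted, neg_mul] using h

lemma integrable_prod_exp_risk_sub_empRisk (hmeas : Measurable (Function.uncurry ℓ))
    (hℓ : ∀ z θ, |ℓ z θ| ≤ C) (hn : n ≠ 0) (t : ℝ) :
    Integrable (Function.uncurry fun (S : Fin n → Z) θ =>
      Real.exp (t * (risk ℓ P θ / 2 - empRisk ℓ S θ))) ((Measure.pi fun _ => P).prod π) :=
  integrable_exp_mul_of_abs_le
    ((((measurable_risk hmeas).comp measurable_snd).div_const 2).sub
      (measurable_uncurry_empRisk hmeas n)).aemeasurable
    (ae_of_all _ fun p => abs_half_risk_sub_empRisk_le hn hℓ p.1 p.2) t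

lemma integral_integral_exp_risk_sub_empRisk_le_one (hmeas : Measurable (Function.uncurry ℓ))
    (hℓ : ∀ z θ, |ℓ z θ| ≤ C) {c α : ℝ} (hc : 0 < c)
    (hBern : ∀ θ, ∫ z, ℓ z θ ^ 2 ∂P ≤ c * risk ℓ P θ) (hα : 0 < α) (hαc : α * (c + C) ≤ 1)
    (hn : n ≠ 0) :
    ∫ S, ∫ θ, Real.exp (α * n * (risk ℓ P θ / 2 - empRisk ℓ S θ)) ∂π
      ∂(Measure.pi fun _ : Fin n => P) ≤ 1 := by
  have hint := integrable_prod_exp_risk_sub_empRisk (P := P) (π := π) hmeas hℓ hn (α * n)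
  rw [integral_integral_swap hint]
  refine (integral_mono hint.integral_prod_right (integrable_const 1) fun θ => ?_).trans_eq
    (by simp)
  exact integral_exp_risk_sub_empRisk_le_one hmeas.of_uncurry_right (fun z => hℓ z θ) hc
    (hBern θ) hα hαc

lemma integrable_prod_empRisk (hmeas : Measurable (Function.uncurry ℓ))
    (hℓ : ∀ z θ, |ℓ z θ| ≤ C) (hn : n ≠ 0) (ρ : Measure Θ) [IsFiniteMeasure ρ] :
    Integrable (Function.uncurry fun (S : Fin n → Z) θ => empRisk ℓ S θ)
      ((Measure.pi fun _ => P).prod ρ) :=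
  .of_bound (measurable_uncurry_empRisk hmeas n).aestronglyMeasurable C
    (ae_of_all _ fun p => abs_empRisk_le hn hℓ p.1 p.2)

lemma integral_integral_empRisk (hmeas : Measurable (Function.uncurry ℓ))
    (hℓ : ∀ z θ, |ℓ z θ| ≤ C) (hn : n ≠ 0) (ρ : Measure Θ) [IsFiniteMeasure ρ] :
    ∫ S, ∫ θ, empRisk ℓ S θ ∂ρ ∂(Measure.pi fun _ : Fin n => P) = ∫ θ, risk ℓ P θ ∂ρ := by
  rw [integral_integral_swap (integrable_prod_empRisk hmeas hℓ hn ρ)]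
  refine integral_congr_ae (ae_of_all _ fun θ => integral_empRisk hn ?_)
  exact .of_bound hmeas.of_uncurry_right.aestronglyMeasurable C (ae_of_all _ fun z => hℓ z θ)

lemma integrable_integral_risk_gibbs (hmeas : Measurable (Function.uncurry ℓ))
    (hℓ : ∀ z θ, |ℓ z θ| ≤ C) (hn : n ≠ 0) (α : ℝ) :
    Integrable (fun S : Fin n → Z => ∫ θ, risk ℓ P θ ∂(gibbs ℓ π α S))
      (Measure.pi fun _ => P) := by
  refine .of_bound (StronglyMeasurable.aestronglyMeasurable ?_) C (ae_of_all _ fun S => ?_)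
  · simp_rw [gibbs_eq_tilted]
    exact stronglyMeasurable_integral_tilted ((measurable_uncurry_empRisk hmeas n).const_mul _)
      ((measurable_risk hmeas).comp measurable_snd).stronglyMeasurable
  · have := isProbabilityMeasure_gibbs (π := π) hmeas hℓ hn α S
    simpa only [probReal_univ, mul_one] using
      norm_integral_le_of_norm_le_const (μ := gibbs ℓ π α S) (f := risk ℓ P)
        (ae_of_all _ fun θ => abs_risk_le hℓ θ)

lemma mul_integral_integral_risk_gibbs_le (hmeas : Measurable (Function.uncurry ℓ))
    (hℓ : ∀ z θ, |ℓ z θ| ≤ C) (hn : n ≠ 0) (α : ℝ) {A : Set Θ} (hA : π A ≠ 0) :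
    α * n / 2 * ∫ S, ∫ θ, risk ℓ P θ ∂(gibbs ℓ π α S) ∂(Measure.pi fun _ : Fin n => P) ≤
      (∫ S, ∫ θ, Real.exp (α * n * (risk ℓ P θ / 2 - empRisk ℓ S θ)) ∂π
        ∂(Measure.pi fun _ : Fin n => P)) - 1 +
        α * n * (∫ θ, risk ℓ P θ ∂(π[|A])) - Real.log (π.real A) := by
  set Q := Measure.pi fun _ : Fin n => P
  set W : (Fin n → Z) → ℝ := fun S =>
    ∫ θ, Real.exp (α * n * (risk ℓ P θ / 2 - empRisk ℓ S θ)) ∂π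
  set E : (Fin n → Z) → ℝ := fun S => ∫ θ, empRisk ℓ S θ ∂(π[|A])
  have hWint : Integrable W Q :=
    (integrable_prod_exp_risk_sub_empRisk hmeas hℓ hn (α * n)).integral_prod_left
  have hEint : Integrable E Q := (integrable_prod_empRisk hmeas hℓ hn _).integral_prod_left
  have hsum : Integrable (fun S => W S + α * n * E S) Q := hWint.add (hEint.const_mul _)
  have hpoint (S : Fin n → Z) : α * n / 2 * ∫ θ, risk ℓ P θ ∂(gibbs ℓ π α S) ≤
      W S + α * n * E S - (1 + Real.log (π.real A)) := by
    have hW : 0 < W S := integral_exp_pos (integrable_exp_risk_sub_empRisk hmeas hℓ hn _ S)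
    linarith [integral_risk_gibbs_le (P := P) hmeas hℓ hn α hA S, Real.log_le_sub_one_of_pos hW]
  calc α * n / 2 * ∫ S, ∫ θ, risk ℓ P θ ∂(gibbs ℓ π α S) ∂Q
      ≤ ∫ S, (W S + α * n * E S - (1 + Real.log (π.real A))) ∂Q := by
        rw [← integral_const_mul]
        exact integral_mono ((integrable_integral_risk_gibbs hmeas hℓ hn α).const_mul _)
          (hsum.sub (integrable_const _)) hpoint
    _ = (∫ S, W S ∂Q) + α * n * (∫ θ, risk ℓ P θ ∂(π[|A])) - (1 + Real.log (π.real A)) := by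
        rw [integral_sub hsum (integrable_const _), integral_add hWint (hEint.const_mul _),
          integral_const_mul, integral_integral_empRisk hmeas hℓ hn, integral_const,
          probReal_univ, one_smul]
    _ = _ := by ring

lemma integral_integral_risk_gibbs_le_of_bernstein (hmeas : Measurable (Function.uncurry ℓ))
    (hℓ : ∀ z θ, |ℓ z θ| ≤ C) {c α : ℝ} (hc : 0 < c)
    (hBern : ∀ θ, ∫ z, ℓ z θ ^ 2 ∂P ≤ c * risk ℓ P θ) (hα : 0 < α) (hαc : α * (c + C) ≤ 1)
    (hn : n ≠ 0) {A : Set Θ} (hA : π A ≠ 0) :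
    ∫ S, ∫ θ, risk ℓ P θ ∂(gibbs ℓ π α S) ∂(Measure.pi fun _ : Fin n => P) ≤
      2 * (∫ θ, risk ℓ P θ ∂(π[|A]) - Real.log (π.real A) / (α * n)) := by
  have hmoment := integral_integral_exp_risk_sub_empRisk_le_one (π := π) hmeas hℓ hc hBern hα hαc hn
  have hscaled := mul_integral_integral_risk_gibbs_le (P := P) hmeas hℓ hn α hA
  calc ∫ S, ∫ θ, risk ℓ P θ ∂(gibbs ℓ π α S) ∂(Measure.pi fun _ : Fin n => P)
      = 2 / (α * n) * (α * n / 2 * ∫ S, ∫ θ, risk ℓ P θ ∂(gibbs ℓ π α S)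
          ∂(Measure.pi fun _ : Fin n => P)) := by
        field_simp
    _ ≤ 2 / (α * n) * (α * n * (∫ θ, risk ℓ P θ ∂(π[|A])) - Real.log (π.real A)) := by
        gcongr
        linarith
    _ = _ := by field_simp

end PACBayes

section ExcessLoss

/-- The excess loss of `θ` over a reference parameter `θ₀`. Replacing `ℓ` by it shifts the risk by
a constant and leaves the Gibbs posterior unchanged. -/
def excessLoss {Z Θ : Type*} (ℓ : Z → Θ → ℝ) (θ₀ : Θ) (z : Z) (θ : Θ) : ℝ :=
  ℓ z θ - ℓ z θ₀

variable {Z Θ : Type*} {ℓ : Z → Θ → ℝ} {θ₀ : Θ}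

lemma empRisk_excessLoss {n : ℕ} (ℓ : Z → Θ → ℝ) (θ₀ : Θ) (S : Fin n → Z) (θ : Θ) :
    empRisk (excessLoss ℓ θ₀) S θ = empRisk ℓ S θ - empRisk ℓ S θ₀ := by
  simp only [empRisk, excessLoss, Finset.sum_sub_distrib, sub_div]

lemma gibbs_excessLoss [MeasurableSpace Θ] {n : ℕ} (ℓ : Z → Θ → ℝ) (θ₀ : Θ) (π : Measure Θ)
    [IsProbabilityMeasure π] (α : ℝ) (S : Fin n → Z) :
    gibbs (excessLoss ℓ θ₀) π α S = gibbs ℓ π α S := by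
  have hshift : (fun θ => -(α * n) * empRisk ℓ S θ) =
      (fun _ => -(α * n) * empRisk ℓ S θ₀) +
        fun θ => -(α * n) * empRisk (excessLoss ℓ θ₀) S θ := by
    ext θ
    rw [Pi.add_apply, empRisk_excessLoss]
    ring
  rw [gibbs_eq_tilted, gibbs_eq_tilted, hshift, ← tilted_tilted (integrable_const _), tilted_const]

variable [MeasurableSpace Z] {P : Measure Z}

lemma risk_excessLoss {θ : Θ} (hθ : Integrable (fun z => ℓ z θ) P)
    (hθ₀ : Integrable (fun z => ℓ z θ₀) P) :
    risk (excessLoss ℓ θ₀) P θ = risk ℓ P θ - risk ℓ P θ₀ :=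
  integral_sub hθ hθ₀

lemma measurable_uncurry_excessLoss [MeasurableSpace Θ] (hmeas : Measurable (Function.uncurry ℓ))
    (θ₀ : Θ) : Measurable (Function.uncurry (excessLoss ℓ θ₀)) :=
  hmeas.sub (hmeas.of_uncurry_right.comp measurable_fst)

lemma integrable_of_abs_excessLoss_le [MeasurableSpace Θ] [IsFiniteMeasure P] {C : ℝ}
    (hmeas : Measurable (Function.uncurry ℓ)) (hint : Integrable (fun z => ℓ z θ₀) P)
    (hℓ : ∀ z θ, |excessLoss ℓ θ₀ z θ| ≤ C) (θ : Θ) : Integrable (fun z => ℓ z θ) P := by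
  have hexcess : Integrable (fun z => excessLoss ℓ θ₀ z θ) P :=
    .of_bound (measurable_uncurry_excessLoss hmeas θ₀).of_uncurry_right.aestronglyMeasurable C
      (ae_of_all _ fun z => hℓ z θ)
  exact (hexcess.add hint).congr (ae_of_all _ fun z => sub_add_cancel _ _)

variable [MeasurableSpace Θ] [IsProbabilityMeasure P] {π : Measure Θ} [IsProbabilityMeasure π]
  {C : ℝ} {n : ℕ}

lemma integral_integral_risk_gibbs_eq (hmeas : Measurable (Function.uncurry ℓ))
    (hint : Integrable (fun z => ℓ z θ₀) P) (hℓ : ∀ z θ, |excessLoss ℓ θ₀ z θ| ≤ C) (hn : n ≠ 0)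
    (α : ℝ) :
    ∫ S, ∫ θ, risk ℓ P θ ∂(gibbs ℓ π α S) ∂(Measure.pi fun _ : Fin n => P) =
      risk ℓ P θ₀ + ∫ S, ∫ θ, risk (excessLoss ℓ θ₀) P θ ∂(gibbs (excessLoss ℓ θ₀) π α S)
        ∂(Measure.pi fun _ : Fin n => P) := by
  have hmeas' := measurable_uncurry_excessLoss hmeas θ₀
  have hrisk (θ : Θ) : risk ℓ P θ = risk ℓ P θ₀ + risk (excessLoss ℓ θ₀) P θ := by
    rw [risk_excessLoss (integrable_of_abs_excessLoss_le hmeas hint hℓ θ) hint]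
    ring
  have hinner (S : Fin n → Z) : ∫ θ, risk ℓ P θ ∂(gibbs ℓ π α S) =
      risk ℓ P θ₀ + ∫ θ, risk (excessLoss ℓ θ₀) P θ ∂(gibbs (excessLoss ℓ θ₀) π α S) := by
    have := isProbabilityMeasure_gibbs (π := π) hmeas' hℓ hn α S
    have hexcess : Integrable (risk (excessLoss ℓ θ₀) P) (gibbs (excessLoss ℓ θ₀) π α S) :=
      .of_bound (measurable_risk hmeas').aestronglyMeasurable C (ae_of_all _ (abs_risk_le hℓ))
    rw [← gibbs_excessLoss ℓ θ₀, integral_congr_ae (ae_of_all _ hrisk),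
      integral_add (integrable_const _) hexcess, integral_const, probReal_univ, one_smul]
  simp_rw [hinner]
  rw [integral_add (integrable_const _) (integrable_integral_risk_gibbs hmeas' hℓ hn α),
    integral_const, probReal_univ, one_smul]

lemma integral_integral_risk_gibbs_le_of_sublevel (hmeas : Measurable (Function.uncurry ℓ))
    (hint : Integrable (fun z => ℓ z θ₀) P) (hℓ : ∀ z θ, |ℓ z θ - ℓ z θ₀| ≤ C) {c α : ℝ}
    (hc : 0 < c)
    (hBern : ∀ θ, ∫ z, (ℓ z θ - ℓ z θ₀) ^ 2 ∂P ≤ c * (risk ℓ P θ - risk ℓ P θ₀))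
    (hα : 0 < α) (hαc : α * (c + C) ≤ 1) (hn : n ≠ 0) {s : ℝ}
    (hs : π {θ | risk ℓ P θ - risk ℓ P θ₀ ≤ s} ≠ 0) :
    ∫ S, ∫ θ, risk ℓ P θ ∂(gibbs ℓ π α S) ∂(Measure.pi fun _ : Fin n => P) ≤
      risk ℓ P θ₀ + 2 * (s - Real.log (π.real {θ | risk ℓ P θ - risk ℓ P θ₀ ≤ s}) / (α * n)) := by
  set A := {θ | risk ℓ P θ - risk ℓ P θ₀ ≤ s}
  have hmeas' := measurable_uncurry_excessLoss hmeas θ₀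
  have hrisk (θ : Θ) : risk (excessLoss ℓ θ₀) P θ = risk ℓ P θ - risk ℓ P θ₀ :=
    risk_excessLoss (integrable_of_abs_excessLoss_le hmeas hint hℓ θ) hint
  have hA : MeasurableSet A :=
    measurableSet_le ((measurable_risk hmeas).sub_const _) measurable_const
  have : IsProbabilityMeasure (π[|A]) := cond_isProbabilityMeasure hs
  have hexcess : Integrable (risk (excessLoss ℓ θ₀) P) (π[|A]) :=
    .of_bound (measurable_risk hmeas').aestronglyMeasurable C (ae_of_all _ (abs_risk_le hℓ))
  have hcond : ∫ θ, risk (excessLoss ℓ θ₀) P θ ∂(π[|A]) ≤ s := by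
    refine (integral_mono_ae hexcess (integrable_const s) ?_).trans_eq (by simp)
    filter_upwards [ae_cond_mem hA] with θ hθ using (hrisk θ).trans_le hθ
  rw [integral_integral_risk_gibbs_eq hmeas hint hℓ hn]
  gcongr
  refine (integral_integral_risk_gibbs_le_of_bernstein hmeas' hℓ hc (fun θ => ?_) hα hαc hn
    hs).trans ?_
  · simpa only [hrisk, excessLoss] using hBern θ
  · gcongr

end ExcessLoss

lemma neg_log_le_of_rpow_div_le {s d κ m : ℝ} (hs : 0 < s) (hκ : 0 < κ) (hm : s ^ d / κ ≤ m) :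
    -Real.log m ≤ d * Real.log s⁻¹ + Real.log κ := by
  have hsd : 0 < s ^ d := Real.rpow_pos_of_pos hs d
  have h := Real.log_le_log (div_pos hsd hκ) hm
  rw [Real.log_div hsd.ne' hκ.ne', Real.log_rpow hs] at h
  rw [Real.log_inv]
  linarith

theorem gibbs_fast_rate_of_prior_mass_general
    {Z Θ : Type*} [MeasurableSpace Z] [MeasurableSpace Θ]
    (ℓ : Z → Θ → ℝ) (hℓmeas : Measurable (Function.uncurry ℓ))
    (P : Measure Z) [IsProbabilityMeasure P]
    (θstar : Θ) (hθstar : ∀ θ, risk ℓ P θstar ≤ risk ℓ P θ)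
    (hint : Integrable (fun z => ℓ z θstar) P)
    (C : ℝ) (hℓ : ∀ z θ, |ℓ z θ - ℓ z θstar| ≤ C)
    (c : ℝ) (hc : 0 < c)
    (hBern : ∀ θ, ∫ z, (ℓ z θ - ℓ z θstar) ^ 2 ∂P ≤ c * (risk ℓ P θ - optRisk ℓ P))
    (π : Measure Θ) [IsProbabilityMeasure π]
    (n : ℕ) (α : ℝ) (hαc : α * (c + C) ≤ 1)
    (d κ : ℝ) (hd : 0 < d) (hκ : 0 < κ) (hdn : d ≤ α * n)
    (hmass : ∀ s ∈ Set.Ioc (0 : ℝ) 1,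
      s ^ d / κ ≤ (π {θ | risk ℓ P θ - optRisk ℓ P ≤ s}).toReal) :
    (∫ S, ∫ θ, risk ℓ P θ ∂(gibbs ℓ π α S) ∂(Measure.pi fun _ : Fin n => P)) ≤
      optRisk ℓ P + 2 * (d * (1 + Real.log (α * n / d)) + Real.log κ) / (α * n) := by
  have hαn : 0 < α * n := hd.trans_le hdn
  have hα : 0 < α := pos_of_mul_pos_left hαn n.cast_nonneg
  have hn : n ≠ 0 := by
    rintro rfl
    simp at hαn
  rw [optRisk_eq_risk hθstar] at hBern hmass ⊢
  -- `s = d / (αn)` minimises `s + d log(1/s) / (αn)`.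
  set s := d / (α * n) with hs_def
  have hs : 0 < s := div_pos hd hαn
  set A := {θ | risk ℓ P θ - risk ℓ P θstar ≤ s}
  have hA : s ^ d / κ ≤ π.real A := hmass s ⟨hs, (div_le_one hαn).2 hdn⟩
  have hApos : 0 < π.real A := (div_pos (Real.rpow_pos_of_pos hs d) hκ).trans_le hA
  have hlog : -Real.log (π.real A) ≤ d * Real.log (α * n / d) + Real.log κ := by
    simpa only [hs_def, inv_div] using neg_log_le_of_rpow_div_le hs hκ hA
  calc ∫ S, ∫ θ, risk ℓ P θ ∂(gibbs ℓ π α S) ∂(Measure.pi fun _ : Fin n => P)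
      ≤ risk ℓ P θstar + 2 * (s - Real.log (π.real A) / (α * n)) :=
        integral_integral_risk_gibbs_le_of_sublevel hℓmeas hint hℓ hc hBern hα hαc hn
          ((measureReal_ne_zero_iff).1 hApos.ne')
    _ = risk ℓ P θstar + 2 * (d + -Real.log (π.real A)) / (α * n) := by ring
    _ ≤ risk ℓ P θstar + 2 * (d + (d * Real.log (α * n / d) + Real.log κ)) / (α * n) := by gcongr
    _ = _ := by ring

/-- Corollary 2 of the paper, second statement: under Bernstein's condition and the
prior mass condition, the Gibbs posterior with `α = 1/(c+C)` achieves the fast rate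
`2(d(1 + log(αn/d)) + log κ)/(αn)`. -/
theorem gibbs_fast_rate_of_prior_mass
    {Z Θ : Type*} [MeasurableSpace Z] [MeasurableSpace Θ]
    (ℓ : Z → Θ → ℝ) (hℓmeas : Measurable (Function.uncurry ℓ))
    (C : ℝ) (hC : 0 < C) (hℓ : ∀ z θ, ℓ z θ ∈ Set.Icc 0 C)
    (P : Measure Z) [IsProbabilityMeasure P]
    (θstar : Θ) (hθstar : ∀ θ, risk ℓ P θstar ≤ risk ℓ P θ)
    (c : ℝ) (hc : 0 < c)
    (hBern : ∀ θ, ∫ z, (ℓ z θ - ℓ z θstar) ^ 2 ∂P ≤ c * (risk ℓ P θ - optRisk ℓ P))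
    (π : Measure Θ) [IsProbabilityMeasure π]
    (n : ℕ) (hn : 0 < n) (α : ℝ) (hα : α = 1 / (c + C))
    (d κ : ℝ) (hd : 0 < d) (hκ : 1 ≤ κ) (hdn : d ≤ α * n)
    (hmass : ∀ s ∈ Set.Ioc (0 : ℝ) 1,
      s ^ d / κ ≤ (π {θ | risk ℓ P θ - optRisk ℓ P ≤ s}).toReal) :
    (∫ S, ∫ θ, risk ℓ P θ ∂(gibbs ℓ π α S) ∂(Measure.pi fun _ : Fin n => P)) ≤
      optRisk ℓ P + 2 * (d * (1 + Real.log (α * n / d)) + Real.log κ) / (α * n) := by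
  have hint : Integrable (fun z => ℓ z θstar) P :=
    .of_mem_Icc 0 C hℓmeas.of_uncurry_right.aemeasurable (ae_of_all _ fun z => hℓ z θstar)
  exact gibbs_fast_rate_of_prior_mass_general ℓ hℓmeas P θstar hθstar hint C
    (fun z θ => by simpa [Real.dist_eq] using Real.dist_le_of_mem_Icc (hℓ z θ) (hℓ z θstar))
    c hc hBern π n α (by rw [hα, one_div_mul_cancel (add_pos hc hC).ne']) d κ hd (by positivity)
    hdn hmass

end
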